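/- Under the local assumptions, let {x_k} be the LMMSS sequence with unit steps: x_{k+1} = x_k + d_k, where d_k solves (J(x_k)ᵀJ(x_k) + λ_k LᵀL)d_k = −J(x_k)ᵀF(x_k) with λ_k = ‖F(x_k)‖² (and d_k = 0 if F(x_k) = 0). If x₀ ∈ B(x*, r) with r = min{ δ/(2 + 4c₃), 1/(2c₅) }, then: (i) dist(x_{k+1}, X*) ≤ c₅·dist(x_k, X*)² for every k; (ii) dist(x_k, X*) → 0 as k → ∞; and (iii) the sequence {x_k} converges to a point x̂ ∈ X* ∩ B(x*, δ). -/

import Mathlib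

open Matrix Metric

/-- The continuous linear map on Euclidean spaces induced by a real matrix. -/
noncomputable def matCLM {m n : ℕ} (A : Matrix (Fin m) (Fin n) ℝ) :
    EuclideanSpace ℝ (Fin n) →L[ℝ] EuclideanSpace ℝ (Fin m) :=
  LinearMap.toContinuousLinearMap (Matrix.toEuclideanLin A)

/-- `c₃ = (1/(c₂√γ))·√(c₁² + c₂²(nL² + c_F²))`, where `nL = ‖L‖` (spectral norm). -/
noncomputable def lmC3 (c1 c2 cF γ nL : ℝ) : ℝ :=
  (1 / (c2 * Real.sqrt γ)) * Real.sqrt (c1 ^ 2 + c2 ^ 2 * (nL ^ 2 + cF ^ 2))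

/-- `c₄ = √(c₁² + c_F²·nL²)`, where `nL = ‖L‖` (spectral norm). -/
noncomputable def lmC4 (c1 cF nL : ℝ) : ℝ :=
  Real.sqrt (c1 ^ 2 + cF ^ 2 * nL ^ 2)

/-- `c₅ = (c₁c₃² + c₄)/c₂`. -/
noncomputable def lmC5 (c1 c2 cF γ nL : ℝ) : ℝ :=
  (c1 * (lmC3 c1 c2 cF γ nL) ^ 2 + lmC4 c1 cF nL) / c2

section MatCLM

open scoped RealInnerProductSpace

lemma matCLM_add {m n : ℕ} (A B : Matrix (Fin m) (Fin n) ℝ) :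
    matCLM (A + B) = matCLM A + matCLM B := by
  simp [matCLM]

lemma matCLM_smul {m n : ℕ} (c : ℝ) (A : Matrix (Fin m) (Fin n) ℝ) :
    matCLM (c • A) = c • matCLM A := by
  simp [matCLM]

lemma matCLM_mul_apply {m n p : ℕ} (A : Matrix (Fin m) (Fin n) ℝ)
    (B : Matrix (Fin n) (Fin p) ℝ) (v : EuclideanSpace ℝ (Fin p)) :
    matCLM (A * B) v = matCLM A (matCLM B v) := by
  simp [matCLM, Matrix.toLpLin_apply, Matrix.mulVec_mulVec]

lemma inner_matCLM_transpose {m n : ℕ} (A : Matrix (Fin m) (Fin n) ℝ)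
    (u : EuclideanSpace ℝ (Fin m)) (w : EuclideanSpace ℝ (Fin n)) :
    ⟪matCLM Aᵀ u, w⟫ = ⟪u, matCLM A w⟫ := by
  have h := Matrix.toEuclideanLin_conjTranspose_eq_adjoint A
  rw [Matrix.conjTranspose_eq_transpose_of_trivial] at h
  simp only [matCLM, LinearMap.coe_toContinuousLinearMap', h, LinearMap.adjoint_inner_left]

/-- The variational form of the regularized normal equations. -/
lemma inner_add_mul_inner_of_normal_eq {m n p : ℕ} (A : Matrix (Fin m) (Fin n) ℝ)
    (B : Matrix (Fin p) (Fin n) ℝ) (μ : ℝ) (f : EuclideanSpace ℝ (Fin m))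
    (d : EuclideanSpace ℝ (Fin n))
    (h : matCLM (Aᵀ * A + μ • (Bᵀ * B)) d = -(matCLM Aᵀ f)) (w : EuclideanSpace ℝ (Fin n)) :
    ⟪matCLM A d + f, matCLM A w⟫ + μ * ⟪matCLM B d, matCLM B w⟫ = 0 := by
  have h' := congrArg (fun z => ⟪z, w⟫) h
  simp only [matCLM_add, matCLM_smul, _root_.add_apply,
    _root_.smul_apply, matCLM_mul_apply, inner_add_left, real_inner_smul_left,
    inner_neg_left, inner_matCLM_transpose] at h'
  rw [inner_add_left]
  linarith

end MatCLM

section Regularized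

open scoped RealInnerProductSpace

variable {E G H : Type*} [NormedAddCommGroup E] [InnerProductSpace ℝ E]
  [NormedAddCommGroup G] [InnerProductSpace ℝ G] [NormedAddCommGroup H] [InnerProductSpace ℝ H]

/-- A critical point of `v ↦ ‖A v + f‖² + μ ‖B v‖²` is a minimizer. -/
lemma regularized_residual_le (A : E →L[ℝ] G) (B : E →L[ℝ] H) {μ : ℝ} (hμ : 0 ≤ μ) (f : G)
    (d : E) (h : ∀ w, ⟪A d + f, A w⟫ + μ * ⟪B d, B w⟫ = 0) (v : E) :
    ‖A d + f‖ ^ 2 + μ * ‖B d‖ ^ 2 ≤ ‖A v + f‖ ^ 2 + μ * ‖B v‖ ^ 2 := by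
  have hA : A v + f = (A d + f) + A (v - d) := by rw [map_sub]; abel
  have hB : B v = B d + B (v - d) := by rw [map_sub]; abel
  rw [hA, hB, norm_add_sq_real (A d + f), norm_add_sq_real (B d)]
  nlinarith [h (v - d), sq_nonneg ‖A (v - d)‖, mul_nonneg hμ (sq_nonneg ‖B (v - d)‖)]

lemma norm_map_le_of_critical (A : E →L[ℝ] G) (B : E →L[ℝ] H) {μ : ℝ} (hμ : 0 ≤ μ) (f : G)
    (d : E) (h : ∀ w, ⟪A d + f, A w⟫ + μ * ⟪B d, B w⟫ = 0) : ‖A d‖ ≤ ‖f‖ := by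
  have h1 := h d
  rw [inner_add_left, real_inner_self_eq_norm_sq, real_inner_self_eq_norm_sq] at h1
  have h2 := (abs_le.1 (abs_real_inner_le_norm f (A d))).1
  have h3 := mul_nonneg hμ (sq_nonneg ‖B d‖)
  by_contra! hlt
  nlinarith [norm_nonneg f]

end Regularized

/-- `c₃² γ = c₁²/c₂² + nL² + c_F²`, cleared of denominators. -/
lemma lmC3_sq {c1 c2 cF γ nL : ℝ} (hc2 : 0 < c2) (hγ : 0 < γ) :
    γ * (c2 ^ 2 * lmC3 c1 c2 cF γ nL ^ 2) = c1 ^ 2 + c2 ^ 2 * (nL ^ 2 + cF ^ 2) := by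
  have h1 : 0 ≤ c1 ^ 2 + c2 ^ 2 * (nL ^ 2 + cF ^ 2) := by positivity
  unfold lmC3
  rw [mul_pow, Real.sq_sqrt h1, div_pow, mul_pow, Real.sq_sqrt hγ.le]
  field_simp

lemma lmC3_nonneg {c1 c2 cF γ nL : ℝ} (hc2 : 0 < c2) : 0 ≤ lmC3 c1 c2 cF γ nL := by
  unfold lmC3; positivity

lemma lmC4_nonneg (c1 cF nL : ℝ) : 0 ≤ lmC4 c1 cF nL := Real.sqrt_nonneg _

lemma lmC4_sq (c1 cF nL : ℝ) : lmC4 c1 cF nL ^ 2 = c1 ^ 2 + cF ^ 2 * nL ^ 2 :=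
  Real.sq_sqrt (by positivity)

lemma lmC5_pos {c1 c2 cF γ nL : ℝ} (hc1 : 0 < c1) (hc2 : 0 < c2) :
    0 < lmC5 c1 c2 cF γ nL := by
  have h4 : 0 < lmC4 c1 cF nL := Real.sqrt_pos.2 (by positivity)
  unfold lmC5
  positivity

/-- A point within `δ` of a zero of `F` has a nearest zero within `2 * δ` of it. -/
lemma exists_nearest_zero {E G : Type*} [NormedAddCommGroup E] [ProperSpace E]
    [NormedAddCommGroup G] {F : E → G} (hF : Continuous F) {xstar y : E} (hxstar : F xstar = 0)
    {δ : ℝ} (hy : y ∈ closedBall xstar δ) :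
    ∃ z, F z = 0 ∧ z ∈ closedBall xstar (2 * δ) ∧ ‖z - y‖ = infDist y {y | F y = 0} := by
  have hcl : IsClosed {y | F y = 0} := isClosed_singleton.preimage hF
  obtain ⟨z, hz, hzy⟩ := hcl.exists_infDist_eq_dist ⟨xstar, hxstar⟩ y
  have h1 : infDist y {y | F y = 0} ≤ dist y xstar := infDist_le_dist_of_mem hxstar
  rw [mem_closedBall] at hy
  refine ⟨z, hz, ?_, by rw [hzy, dist_comm, dist_eq_norm]⟩
  rw [mem_closedBall]
  linarith [dist_triangle z y xstar, dist_comm z y]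

/-- The step is of the order of the distance to the solution set, and the linearized residual is
quadratically small. -/
lemma lm_step_bounds {n m p : ℕ} {F : EuclideanSpace ℝ (Fin n) → EuclideanSpace ℝ (Fin m)}
    (hF : Continuous F) {A : Matrix (Fin m) (Fin n) ℝ} {L : Matrix (Fin p) (Fin n) ℝ}
    {xstar y d : EuclideanSpace ℝ (Fin n)} (hxstar : F xstar = 0)
    {δ c1 cF c2 γ : ℝ} (hc2pos : 0 < c2) (hγ : 0 < γ)
    (hy : y ∈ closedBall xstar δ)
    (hc1 : ∀ x ∈ closedBall xstar (2 * δ),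
      ‖matCLM A (x - y) - (F x - F y)‖ ≤ c1 * ‖x - y‖ ^ 2)
    (hcF : ∀ x ∈ closedBall xstar (2 * δ), ‖F x - F y‖ ≤ cF * ‖x - y‖)
    (hc2 : c2 * infDist y {y | F y = 0} ≤ ‖F y‖)
    (hcomp : γ * ‖d‖ ^ 2 ≤ ‖matCLM A d‖ ^ 2 + ‖matCLM L d‖ ^ 2)
    (hd0 : F y = 0 → d = 0)
    (hd : F y ≠ 0 →
      matCLM (Aᵀ * A + ‖F y‖ ^ 2 • (Lᵀ * L)) d = -(matCLM Aᵀ (F y))) :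
    ‖d‖ ≤ lmC3 c1 c2 cF γ ‖matCLM L‖ * infDist y {y | F y = 0} ∧
      ‖matCLM A d + F y‖ ≤ lmC4 c1 cF ‖matCLM L‖ * infDist y {y | F y = 0} ^ 2 := by
  obtain ⟨z, hz, hzball, hzy⟩ := exists_nearest_zero hF hxstar hy
  set D := infDist y {y | F y = 0}
  have hD : 0 ≤ D := infDist_nonneg
  have h3 : 0 ≤ lmC3 c1 c2 cF γ ‖matCLM L‖ := lmC3_nonneg hc2pos
  have h4 : 0 ≤ lmC4 c1 cF ‖matCLM L‖ := lmC4_nonneg _ _ _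
  by_cases hFy : F y = 0
  · simp only [hd0 hFy, hFy, map_zero, add_zero, norm_zero]
    constructor <;> positivity
  have hcrit := inner_add_mul_inner_of_normal_eq A L _ _ _ (hd hFy)
  have hmin := regularized_residual_le _ _ (sq_nonneg ‖F y‖) _ _ hcrit (z - y)
  have hAd := norm_map_le_of_critical _ _ (sq_nonneg ‖F y‖) _ _ hcrit
  have hFpos : 0 < ‖F y‖ := norm_pos_iff.2 hFy
  have hFD : ‖F y‖ ≤ cF * D := by
    have := hcF z hzball
    rwa [hz, zero_sub, norm_neg, hzy] at this
  have hres : ‖matCLM A (z - y) + F y‖ ≤ c1 * D ^ 2 := by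
    have := hc1 z hzball
    rwa [hz, zero_sub, sub_neg_eq_add, hzy] at this
  have hres2 : ‖matCLM A (z - y) + F y‖ ^ 2 ≤ c1 ^ 2 * (D ^ 2) ^ 2 := by
    rw [← mul_pow]; gcongr
  have hL : ‖matCLM L (z - y)‖ ^ 2 ≤ ‖matCLM L‖ ^ 2 * D ^ 2 := by
    rw [← mul_pow, ← hzy]
    gcongr
    exact (matCLM L).le_opNorm _
  have hFD2 : ‖F y‖ ^ 2 ≤ cF ^ 2 * D ^ 2 := by rw [← mul_pow]; gcongr
  have hF2 : c2 ^ 2 * D ^ 2 ≤ ‖F y‖ ^ 2 := by rw [← mul_pow]; gcongr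
  have hAd2 : ‖matCLM A d‖ ^ 2 ≤ cF ^ 2 * D ^ 2 := le_trans (by gcongr) hFD2
  have hφ : ‖matCLM A d + F y‖ ^ 2 + ‖F y‖ ^ 2 * ‖matCLM L d‖ ^ 2 ≤
      c1 ^ 2 * (D ^ 2) ^ 2 + ‖F y‖ ^ 2 * (‖matCLM L‖ ^ 2 * D ^ 2) :=
    hmin.trans (by gcongr)
  constructor
  · have hLd : c2 ^ 2 * ‖matCLM L d‖ ^ 2 ≤ (c1 ^ 2 + c2 ^ 2 * ‖matCLM L‖ ^ 2) * D ^ 2 := by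
      have h5 : ‖F y‖ ^ 2 * (c2 ^ 2 * ‖matCLM L d‖ ^ 2) ≤
          ‖F y‖ ^ 2 * ((c1 ^ 2 + c2 ^ 2 * ‖matCLM L‖ ^ 2) * D ^ 2) := by
        have h6 : c2 ^ 2 * (‖F y‖ ^ 2 * ‖matCLM L d‖ ^ 2) ≤
            c2 ^ 2 * (c1 ^ 2 * (D ^ 2) ^ 2 + ‖F y‖ ^ 2 * (‖matCLM L‖ ^ 2 * D ^ 2)) := by
          gcongr
          linarith [sq_nonneg ‖matCLM A d + F y‖]
        have h7 : c1 ^ 2 * D ^ 2 * (c2 ^ 2 * D ^ 2) ≤ c1 ^ 2 * D ^ 2 * ‖F y‖ ^ 2 := by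
          gcongr
        linarith
      exact le_of_mul_le_mul_left h5 (by positivity)
    have hsq : γ * c2 ^ 2 * ‖d‖ ^ 2 ≤
        γ * c2 ^ 2 * (lmC3 c1 c2 cF γ ‖matCLM L‖ * D) ^ 2 := by
      have h8 : c2 ^ 2 * (γ * ‖d‖ ^ 2) ≤ c2 ^ 2 * (cF ^ 2 * D ^ 2 + ‖matCLM L d‖ ^ 2) := by
        gcongr
        linarith
      have h9 : γ * c2 ^ 2 * (lmC3 c1 c2 cF γ ‖matCLM L‖ * D) ^ 2 =
          (c1 ^ 2 + c2 ^ 2 * (‖matCLM L‖ ^ 2 + cF ^ 2)) * D ^ 2 := by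
        rw [← lmC3_sq hc2pos hγ]; ring
      rw [h9]
      linarith
    exact le_of_sq_le_sq (le_of_mul_le_mul_left hsq (by positivity)) (by positivity)
  · refine le_of_sq_le_sq ?_ (by positivity)
    rw [mul_pow, lmC4_sq]
    have h5 : ‖F y‖ ^ 2 * (‖matCLM L‖ ^ 2 * D ^ 2) ≤
        cF ^ 2 * D ^ 2 * (‖matCLM L‖ ^ 2 * D ^ 2) := by gcongr
    have h6 := mul_nonneg (sq_nonneg ‖F y‖) (sq_nonneg ‖matCLM L d‖)
    linarith

/-- If steps are controlled by a distance-like quantity `D` which contracts quadratically as long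
as the iterates stay near `xstar`, then, starting close enough, they do stay near `xstar` and `D`
decays geometrically. -/
lemma iterates_near_of_quadratic_contraction {E : Type*} [NormedAddCommGroup E]
    {x : ℕ → E} {xstar : E} {D : ℕ → ℝ} {δ r a b : ℝ} (hD : ∀ k, 0 ≤ D k) (hr : 0 ≤ r)
    (ha : 0 ≤ a) (hb : 0 ≤ b) (hrδ : r * (1 + 2 * a) ≤ δ) (hbr : b * r ≤ 1 / 2)
    (hx0 : dist (x 0) xstar ≤ r) (hD0 : D 0 ≤ r)
    (hstep : ∀ k, dist (x k) xstar ≤ δ → dist (x (k + 1)) (x k) ≤ a * D k)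
    (hquad : ∀ k, dist (x k) xstar ≤ δ → dist (x (k + 1)) xstar ≤ δ →
      D (k + 1) ≤ b * D k ^ 2) (k : ℕ) :
    dist (x k) xstar ≤ δ ∧ D k ≤ r * (1 / 2) ^ k := by
  suffices h : dist (x k) xstar ≤ r + 2 * a * r * (1 - (1 / 2) ^ k) ∧ D k ≤ r * (1 / 2) ^ k by
    refine ⟨h.1.trans ?_, h.2⟩
    have : 0 ≤ 2 * a * r * (1 / 2 : ℝ) ^ k := by positivity
    linarith
  have hle : ∀ j : ℕ, r + 2 * a * r * (1 - (1 / 2) ^ j) ≤ δ := fun j => by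
    have : 0 ≤ 2 * a * r * (1 / 2 : ℝ) ^ j := by positivity
    linarith
  induction k with
  | zero => simpa using ⟨hx0, hD0⟩
  | succ k ih =>
    obtain ⟨ih1, ih2⟩ := ih
    have hs := hstep k (ih1.trans (hle k))
    have haD : a * D k ≤ a * (r * (1 / 2) ^ k) := by gcongr
    have hx : dist (x (k + 1)) xstar ≤ r + 2 * a * r * (1 - (1 / 2) ^ (k + 1)) := by
      rw [pow_succ]
      linarith [dist_triangle (x (k + 1)) (x k) xstar]
    refine ⟨hx, (hquad k (ih1.trans (hle k)) (hx.trans (hle _))).trans ?_⟩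
    have hp : (1 / 2 : ℝ) ^ k ≤ 1 := pow_le_one₀ (by norm_num) (by norm_num)
    have hp0 : (0 : ℝ) ≤ r * (1 / 2) ^ k := by positivity
    calc b * D k ^ 2 ≤ b * (r * (1 / 2) ^ k) ^ 2 := by have := hD k; gcongr
      _ = b * r * (1 / 2) ^ k * (r * (1 / 2) ^ k) := by ring
      _ ≤ 1 / 2 * 1 * (r * (1 / 2) ^ k) := by gcongr
      _ = r * (1 / 2) ^ (k + 1) := by ring

/-- under the local assumptions, if the LMMSS sequence with unit steps starts at
`x₀ ∈ B(x*, r)` with `r = min{δ/(2 + 4c₃), 1/(2c₅)}`, then (i) `dist(x_{k+1}, X*) ≤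
c₅·dist(x_k, X*)²` for all `k`; (ii) `dist(x_k, X*) → 0`; (iii) `x_k` converges to some
`x̂ ∈ X* ∩ B(x*, δ)`. -/
theorem lmmss_local_quadratic_convergence
    (n m p : ℕ)
    (F : EuclideanSpace ℝ (Fin n) → EuclideanSpace ℝ (Fin m))
    (J : EuclideanSpace ℝ (Fin n) → Matrix (Fin m) (Fin n) ℝ)
    (hdiff : ∀ x, HasFDerivAt F (matCLM (J x)) x)
    (hJcont : Continuous J)
    (hne : ∃ x, F x = 0)
    (xstar : EuclideanSpace ℝ (Fin n)) (hxstar : F xstar = 0)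
    (δ : ℝ) (hδ0 : 0 < δ) (hδh : δ < 1 / 2)
    (c1 : ℝ) (hc1pos : 0 < c1)
    (hc1 : ∀ x ∈ closedBall xstar (2 * δ), ∀ y ∈ closedBall xstar (2 * δ),
      ‖matCLM (J y) (x - y) - (F x - F y)‖ ≤ c1 * ‖x - y‖ ^ 2)
    (cF : ℝ) (hcFpos : 0 < cF)
    (hcF : ∀ x ∈ closedBall xstar (2 * δ), ∀ y ∈ closedBall xstar (2 * δ),
      ‖F x - F y‖ ≤ cF * ‖x - y‖)
    (c2 : ℝ) (hc2pos : 0 < c2)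
    (hc2 : ∀ x ∈ closedBall xstar (2 * δ),
      c2 * infDist x {y | F y = 0} ≤ ‖F x‖)
    (L : Matrix (Fin p) (Fin n) ℝ) (γ : ℝ) (hγ : 0 < γ)
    (hcomp : ∀ (x : EuclideanSpace ℝ (Fin n)) (v : EuclideanSpace ℝ (Fin n)),
      ‖matCLM (J x) v‖ ^ 2 + ‖matCLM L v‖ ^ 2 ≥ γ * ‖v‖ ^ 2)
    (x d : ℕ → EuclideanSpace ℝ (Fin n))
    (hd0 : ∀ k, F (x k) = 0 → d k = 0)
    (hd : ∀ k, F (x k) ≠ 0 →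
      matCLM ((J (x k))ᵀ * J (x k) + ‖F (x k)‖ ^ 2 • (Lᵀ * L)) (d k) =
        -(matCLM (J (x k))ᵀ (F (x k))))
    (hstep : ∀ k, x (k + 1) = x k + d k)
    (hx0 : x 0 ∈ closedBall xstar
      (min (δ / (2 + 4 * lmC3 c1 c2 cF γ ‖matCLM L‖))
        (1 / (2 * lmC5 c1 c2 cF γ ‖matCLM L‖)))) :
    (∀ k, infDist (x (k + 1)) {y | F y = 0} ≤
        lmC5 c1 c2 cF γ ‖matCLM L‖ * infDist (x k) {y | F y = 0} ^ 2) ∧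
      Filter.Tendsto (fun k => infDist (x k) {y | F y = 0}) Filter.atTop (nhds 0) ∧
      ∃ xhat : EuclideanSpace ℝ (Fin n),
        F xhat = 0 ∧ xhat ∈ closedBall xstar δ ∧
          Filter.Tendsto x Filter.atTop (nhds xhat) := by
  have hF : Continuous F := continuous_iff_continuousAt.2 fun y => (hdiff y).continuousAt
  have hc3 : 0 ≤ lmC3 c1 c2 cF γ ‖matCLM L‖ := lmC3_nonneg hc2pos
  have hc5 : 0 < lmC5 c1 c2 cF γ ‖matCLM L‖ := lmC5_pos hc1pos hc2pos
  have hsub : ∀ {y}, y ∈ closedBall xstar δ → y ∈ closedBall xstar (2 * δ) :=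
    fun h => closedBall_subset_closedBall (by linarith) h
  have hbounds : ∀ k, x k ∈ closedBall xstar δ → _ := fun k hk =>
    lm_step_bounds hF hxstar hc2pos hγ hk (fun z hz => hc1 z hz (x k) (hsub hk))
      (fun z hz => hcF z hz (x k) (hsub hk)) (hc2 _ (hsub hk)) (hcomp (x k) (d k))
      (hd0 k) (hd k)
  have hquad : ∀ k, dist (x k) xstar ≤ δ → dist (x (k + 1)) xstar ≤ δ →
      infDist (x (k + 1)) {y | F y = 0} ≤
        lmC5 c1 c2 cF γ ‖matCLM L‖ * infDist (x k) {y | F y = 0} ^ 2 := by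
    intro k hk hk1
    obtain ⟨hdk, hres⟩ := hbounds k hk
    have hlin := hc1 _ (hsub hk1) _ (hsub hk)
    have heb := hc2 _ (hsub hk1)
    have hdiffx : x (k + 1) - x k = d k := by rw [hstep]; abel
    rw [hdiffx] at hlin
    have hFle : ‖F (x (k + 1))‖ ≤ ‖matCLM (J (x k)) (d k) + F (x k)‖ +
        ‖matCLM (J (x k)) (d k) - (F (x (k + 1)) - F (x k))‖ := by
      refine le_trans (le_of_eq ?_) (norm_sub_le _ _)
      congr 1
      abel
    have hd2 : c1 * ‖d k‖ ^ 2 ≤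
        c1 * (lmC3 c1 c2 cF γ ‖matCLM L‖ * infDist (x k) {y | F y = 0}) ^ 2 := by gcongr
    unfold lmC5
    rw [div_mul_eq_mul_div, le_div_iff₀ hc2pos]
    linarith
  set r := min (δ / (2 + 4 * lmC3 c1 c2 cF γ ‖matCLM L‖))
    (1 / (2 * lmC5 c1 c2 cF γ ‖matCLM L‖))
  have hr0 : 0 ≤ r := le_min (by positivity) (by positivity)
  have hrδ : r * (1 + 2 * lmC3 c1 c2 cF γ ‖matCLM L‖) ≤ δ := by
    have h := (le_div_iff₀ (by positivity)).1
      (min_le_left _ _ : r ≤ δ / (2 + 4 * lmC3 c1 c2 cF γ ‖matCLM L‖))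
    linarith
  have hr5 : lmC5 c1 c2 cF γ ‖matCLM L‖ * r ≤ 1 / 2 := by
    have h := (le_div_iff₀ (by positivity)).1
      (min_le_right _ _ : r ≤ 1 / (2 * lmC5 c1 c2 cF γ ‖matCLM L‖))
    linarith
  have hstepD : ∀ k, dist (x k) xstar ≤ δ → dist (x (k + 1)) (x k) ≤
      lmC3 c1 c2 cF γ ‖matCLM L‖ * infDist (x k) {y | F y = 0} := fun k hk => by
    rw [hstep, dist_eq_norm, add_sub_cancel_left]
    exact (hbounds k hk).1
  have hnear := iterates_near_of_quadratic_contraction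
    (D := fun k => infDist (x k) {y | F y = 0}) (fun _ => infDist_nonneg) hr0 hc3 hc5.le hrδ hr5
    hx0 ((infDist_le_dist_of_mem (s := {y | F y = 0}) hxstar).trans hx0) hstepD hquad
  have htend : Filter.Tendsto (fun k => infDist (x k) {y | F y = 0}) Filter.atTop (nhds 0) := by
    refine squeeze_zero (fun _ => infDist_nonneg) (fun k => (hnear k).2) ?_
    simpa using (tendsto_pow_atTop_nhds_zero_of_lt_one
      (by norm_num : (0 : ℝ) ≤ 1 / 2) (by norm_num)).const_mul r
  refine ⟨fun k => hquad k (hnear k).1 (hnear (k + 1)).1, htend, ?_⟩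
  have hcauchy : CauchySeq x := by
    refine cauchySeq_of_le_geometric (1 / 2) (lmC3 c1 c2 cF γ ‖matCLM L‖ * r) (by norm_num)
      fun k => ?_
    rw [dist_comm, mul_assoc]
    exact (hstepD k (hnear k).1).trans (mul_le_mul_of_nonneg_left (hnear k).2 hc3)
  obtain ⟨xhat, hxhat⟩ := cauchySeq_tendsto_of_complete hcauchy
  refine ⟨xhat, ?_, isClosed_closedBall.mem_of_tendsto hxhat
    (Filter.Eventually.of_forall fun k => (hnear k).1), hxhat⟩
  have hcl : IsClosed {y | F y = 0} := isClosed_singleton.preimage hF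
  have hlim := ((continuous_infDist_pt {y | F y = 0}).tendsto xhat).comp hxhat
  exact (hcl.mem_iff_infDist_zero ⟨xstar, hxstar⟩).2 (tendsto_nhds_unique hlim htend)
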